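/- arXiv:2305.09966 — 2 statements merged into one kernel-verified Lean document; each statement's English description precedes it below -/
import Mathlib

section
/- Let A be an AWA with state set Q and let B be the Bustan–Rubin–Vardi NBA constructed from A. For every S ⊆ Q and all Q₃ ⊆ S∖F and Q₄ ⊆ (Q∖S)∖F̂, the language of B started from the macrostate (S, Q∖S, Q₃, Q₄) equals ⋂_{s∈S} L(A^s) ∩ ⋂_{s∈Q∖S} L(Â^s). -/
/-!
Write `T i` for the set of states at which the Büchi game played on the suffix `w[i⋯]` is won by
the player who resolves disjunctions. Here `T` is the largest family of sets of states that is
*progressive*: every transition formula is satisfied by the next member of the family, and an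
accepting state can be forced in boundedly many steps without leaving the family.

* The complement `i ↦ (T i)ᶜ` is progressive for the dual automaton
  (`prog_dual_winSet_compl`): the states outside the dual attractor would form a larger
  progressive family for `M`.
* Progress on both sides yields an accepting macrorun through the macrostates with first components
  `T i`, `(T i)ᶜ`, from any initial breakpoint sets (`exists_macrorun`): since `Q` is finite, one
  bound serves all states of a level, and it serves as a countdown to the next breakpoint.
* An accepting macrorun yields accepting run DAGs for `M` and for its dual from all states of the
  first, respectively second, component of its initial macrostate (`accepts_of_breakpoints`).
  This is one inclusion.
* No word is accepted by both `M` and its dual from the same state (`dual_disjoint`): two accepting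
  run DAGs share a branch, which would visit both accepting and rejecting states infinitely often,
  against weakness.

For the other inclusion, the macrorun through `T` shows that `w` is accepted by `M` from the states
in `T 0` and by the dual from those outside; by disjointness a set `S` for which `w` lies in the
intersection on the right must be equal to `T 0`.
-/

universe u v

/-- Positive Boolean formulas over `Q` (with constants tt and ff, connectives ∧ and ∨). -/
inductive PosBool (Q : Type u) : Type u
  | tt : PosBool Q
  | ff : PosBool Q
  | var : Q → PosBool Q
  | band : PosBool Q → PosBool Q → PosBool Q
  | bor : PosBool Q → PosBool Q → PosBool Q

namespace PosBool

variable {Q : Type u}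

/-- A set `Y` satisfies a positive Boolean formula. -/
def Sat (Y : Set Q) : PosBool Q → Prop
  | .tt => True
  | .ff => False
  | .var q => q ∈ Y
  | .band θ₁ θ₂ => Sat Y θ₁ ∧ Sat Y θ₂
  | .bor θ₁ θ₂ => Sat Y θ₁ ∨ Sat Y θ₂

/-- The states occurring in a formula. -/
def vars : PosBool Q → Set Q
  | .tt => ∅
  | .ff => ∅
  | .var q => {q}
  | .band θ₁ θ₂ => vars θ₁ ∪ vars θ₂
  | .bor θ₁ θ₂ => vars θ₁ ∪ vars θ₂

/-- The dual formula: exchange tt with ff and ∧ with ∨. -/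
def dual : PosBool Q → PosBool Q
  | .tt => .ff
  | .ff => .tt
  | .var q => .var q
  | .band θ₁ θ₂ => .bor (dual θ₁) (dual θ₂)
  | .bor θ₁ θ₂ => .band (dual θ₁) (dual θ₂)

end PosBool

/-- An alternating Büchi automaton with alphabet `α` and state space `Q`. -/
structure ABA (α : Type v) (Q : Type u) where
  init : Q
  delta : Q → α → PosBool Q
  acc : Set Q

namespace ABA

variable {α : Type v} {Q : Type u}

/-- The automaton `A^q`, i.e. `A` with initial state `q`. -/
def setInit (M : ABA α Q) (q : Q) : ABA α Q := { M with init := q }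

/-- Completeness: every transition formula is satisfiable. -/
def Complete (M : ABA α Q) : Prop := ∀ q a, PosBool.Sat (Set.univ : Set Q) (M.delta q a)

/-- Edge of the underlying graph. -/
def edge (M : ABA α Q) (q q' : Q) : Prop := ∃ a, q' ∈ PosBool.vars (M.delta q a)

/-- Reachability in the underlying graph. -/
def reach (M : ABA α Q) : Q → Q → Prop := Relation.ReflTransGen M.edge

/-- The strongly connected component of a state. -/
def sccOf (M : ABA α Q) (q : Q) : Set Q := {q' | M.reach q q' ∧ M.reach q' q}

/-- `C` is an SCC of the underlying graph. -/
def IsSCC (M : ABA α Q) (C : Set Q) : Prop := ∃ q, C = M.sccOf q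

/-- A weak alternating automaton: every SCC is accepting or rejecting. -/
def IsWeak (M : ABA α Q) : Prop := ∀ q : Q, M.sccOf q ⊆ M.acc ∨ M.sccOf q ∩ M.acc = ∅

/-- The dual automaton. -/
def dual (M : ABA α Q) : ABA α Q where
  init := M.init
  delta := fun q a => (M.delta q a).dual
  acc := M.accᶜ

/-- A run DAG of `M` over the ω-word `w`. -/
structure RunDAG (M : ABA α Q) (w : ℕ → α) where
  V : ℕ → Set Q
  E : ℕ → Q → Q → Prop
  init_mem : M.init ∈ V 0
  edge_src : ∀ ℓ q q', E ℓ q q' → q ∈ V ℓ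
  edge_tgt : ∀ ℓ q q', E ℓ q q' → q' ∈ V (ℓ + 1)
  sat : ∀ ℓ q, q ∈ V ℓ → PosBool.Sat {q' | E ℓ q q'} (M.delta q (w ℓ))

/-- An ω-branch of a run DAG. -/
def RunDAG.IsBranch {M : ABA α Q} {w : ℕ → α} (G : M.RunDAG w) (b : ℕ → Q) : Prop :=
  b 0 = M.init ∧ ∀ ℓ, G.E ℓ (b ℓ) (b (ℓ + 1))

/-- A run DAG is accepting if every ω-branch visits accepting states infinitely often. -/
def RunDAG.Accepting {M : ABA α Q} {w : ℕ → α} (G : M.RunDAG w) : Prop :=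
  ∀ b, G.IsBranch b → ∀ n, ∃ m, n ≤ m ∧ b m ∈ M.acc

/-- `M` accepts `w` if there is an accepting run DAG of `M` over `w`. -/
def Accepts (M : ABA α Q) (w : ℕ → α) : Prop := ∃ G : M.RunDAG w, G.Accepting

/-- The language of `M`. -/
def lang (M : ABA α Q) : Set (ℕ → α) := {w | M.Accepts w}

/-- `R`: the union of the rejecting SCCs. -/
def RejPart (M : ABA α Q) : Set Q := {q | M.sccOf q ∩ M.acc = ∅}

/-- `Acc`: the union of the accepting SCCs. -/
def AccPart (M : ABA α Q) : Set Q := {q | M.sccOf q ⊆ M.acc}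

end ABA

/-- The suffix `w[i⋯]` of an ω-word. -/
def suffix {α : Type v} (w : ℕ → α) (i : ℕ) : ℕ → α := fun n => w (i + n)

/-- `Q_w = {s ∈ Q | w ∈ L(A^s)}`. -/
def QSet {α : Type v} {Q : Type u} (M : ABA α Q) (w : ℕ → α) : Set Q :=
  {s | w ∈ (M.setInit s).lang}

/-- The unique sequence `R_w`, i.e. `i ↦ Q_{w[i⋯]}`. -/
def QSeq {α : Type v} {Q : Type u} (M : ABA α Q) (w : ℕ → α) (i : ℕ) : Set Q :=
  QSet M (suffix w i)

/-- A nondeterministic Büchi automaton. -/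
structure NBA (α : Type v) (P : Type u) where
  init : Set P
  delta : P → α → Set P
  acc : Set P

namespace NBA

variable {α : Type v} {P : Type u}

/-- A macrorun of `N` over `w`. -/
def IsMacrorun (N : NBA α P) (w : ℕ → α) (ρ : ℕ → P) : Prop :=
  ρ 0 ∈ N.init ∧ ∀ i, ρ (i + 1) ∈ N.delta (ρ i) (w i)

/-- An accepting macrorun of `N` over `w`. -/
def IsAccMacrorun (N : NBA α P) (w : ℕ → α) (ρ : ℕ → P) : Prop :=
  N.IsMacrorun w ρ ∧ ∀ n, ∃ m, n ≤ m ∧ ρ m ∈ N.acc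

/-- The language of an NBA. -/
def lang (N : NBA α P) : Set (ℕ → α) := {w | ∃ ρ, N.IsAccMacrorun w ρ}

/-- `N^m`: the NBA `N` with set of initial states `{m}`. -/
def fromState (N : NBA α P) (p : P) : NBA α P := { N with init := {p} }

/-- An NBA is unambiguous if it has at most one accepting macrorun over every word. -/
def Unambiguous (N : NBA α P) : Prop :=
  ∀ w ρ₁ ρ₂, N.IsAccMacrorun w ρ₁ → N.IsAccMacrorun w ρ₂ → ρ₁ = ρ₂

end NBA

/-- Macrostates of the Bustan–Rubin–Vardi construction: tuples `(Q₁, Q₂, Q₃, Q₄)`. -/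
abbrev BRVState (Q : Type u) := Set Q × Set Q × Set Q × Set Q

/-- Consistency of a BRV tuple: `Q₂ = Q∖Q₁`, `Q₃ ⊆ Q₁∖F`, `Q₄ ⊆ Q₂∖F̂`. -/
def BRVConsistent {α : Type v} {Q : Type u} (M : ABA α Q) (m : BRVState Q) : Prop :=
  m.2.1 = m.1ᶜ ∧ m.2.2.1 ⊆ m.1 \ M.acc ∧ m.2.2.2 ⊆ m.2.1 \ M.dual.acc

/-- The Bustan–Rubin–Vardi NBA `B` constructed from an AWA. -/
def BRV {α : Type v} {Q : Type u} (M : ABA α Q) : NBA α (BRVState Q) where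
  init := {m | BRVConsistent M m ∧ M.init ∈ m.1}
  delta := fun m σ =>
    {m' | BRVConsistent M m ∧ BRVConsistent M m' ∧
      (∀ s ∈ m.1, PosBool.Sat m'.1 (M.delta s σ)) ∧
      (∀ s ∈ m.2.1, PosBool.Sat m'.2.1 (M.dual.delta s σ)) ∧
      ((m.2.2.1 = ∅ ∧ m.2.2.2 = ∅ ∧ m'.2.2.1 = m'.1 \ M.acc ∧ m'.2.2.2 = m'.2.1 \ M.dual.acc) ∨
       ((m.2.2.1 ≠ ∅ ∨ m.2.2.2 ≠ ∅) ∧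
        (∃ Y₃ ⊆ m'.1, (∀ s ∈ m.2.2.1, PosBool.Sat Y₃ (M.delta s σ)) ∧ m'.2.2.1 = Y₃ \ M.acc) ∧
        (∃ Y₄ ⊆ m'.2.1, (∀ s ∈ m.2.2.2, PosBool.Sat Y₄ (M.dual.delta s σ)) ∧
          m'.2.2.2 = Y₄ \ M.dual.acc)))}
  acc := {m | BRVConsistent M m ∧ m.2.2.1 = ∅ ∧ m.2.2.2 = ∅}

/-- The domain of the distance function at level `i`: `(Q₁ⁱ ∩ R) ∪ (Acc ∖ Q₁ⁱ)`. -/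
def DistDom {α : Type v} {Q : Type u} (M : ABA α Q) (QS : ℕ → Set Q) (i : ℕ) : Set Q :=
  (QS i ∩ M.RejPart) ∪ (M.AccPart \ QS i)

/-- Consistency of a sequence of distance functions (Rules R1 and R2). -/
def ConsistentDist {α : Type v} {Q : Type u} (M : ABA α Q) (w : ℕ → α)
    (QS : ℕ → Set Q) (d : ℕ → Q → ℕ) : Prop :=
  ∀ i : ℕ,
    (∀ p ∈ M.RejPart ∩ QS i,
      PosBool.Sat ((QS (i + 1) \ M.sccOf p) ∪
        {q | q ∈ M.sccOf p ∩ QS (i + 1) ∧ d (i + 1) q ≤ d i p - 1}) (M.delta p (w i)) ∧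
      (1 < d i p →
        ¬ PosBool.Sat ((QS (i + 1) \ M.sccOf p) ∪
          {q | q ∈ M.sccOf p ∩ QS (i + 1) ∧ d (i + 1) q ≤ d i p - 2}) (M.delta p (w i)))) ∧
    (∀ p ∈ M.AccPart \ QS i,
      PosBool.Sat ((QS (i + 1) ∪ M.sccOf p)ᶜ ∪
        {q | q ∈ M.sccOf p \ QS (i + 1) ∧ d (i + 1) q ≤ d i p - 1}) (M.dual.delta p (w i)) ∧
      (1 < d i p →
        ¬ PosBool.Sat ((QS (i + 1) ∪ M.sccOf p)ᶜ ∪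
          {q | q ∈ M.sccOf p \ QS (i + 1) ∧ d (i + 1) q ≤ d i p - 2}) (M.dual.delta p (w i))))

/-- Strict part of a preorder. -/
def StrictOf {Q : Type u} (le : Q → Q → Prop) (p q : Q) : Prop := le p q ∧ ¬ le q p

/-- `le` is a total preorder on `D` (as a relation over `D × D`). -/
def IsTotalPreorderOn {Q : Type u} (D : Set Q) (le : Q → Q → Prop) : Prop :=
  (∀ p q, le p q → p ∈ D ∧ q ∈ D) ∧ (∀ p ∈ D, le p p) ∧
  (∀ p q r, le p q → le q r → le p r) ∧ (∀ p ∈ D, ∀ q ∈ D, le p q ∨ le q p)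

/-- `D` is downwards closed w.r.t. `le` inside the domain `Dom`. -/
def DownClosed {Q : Type u} (le : Q → Q → Prop) (Dom D : Set Q) : Prop :=
  D ⊆ Dom ∧ ∀ q ∈ D, ∀ q', le q' q → q' ∈ D

/-- The set of maximal elements of a preorder on the domain `Dom`. -/
def MaxSet {Q : Type u} (le : Q → Q → Prop) (Dom : Set Q) : Set Q :=
  {q | q ∈ Dom ∧ ∀ q' ∈ Dom, ¬ StrictOf le q q'}

/-- Rule R1' for a rejecting SCC `C`, letter `σ`, sets `Q₁, Q₁'` and preorders `le, le'`. -/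
def RuleR1 {α : Type v} {Q : Type u} (M : ABA α Q) (C : Set Q) (σ : α)
    (Q1 Q1' : Set Q) (le le' : Q → Q → Prop) : Prop :=
  ∀ q ∈ C ∩ Q1, ∀ q' ∈ C ∩ Q1,
    (StrictOf le q q' ↔ ∃ r ∈ C ∩ Q1',
      PosBool.Sat ({r' | r' ∈ C ∩ Q1' ∧ StrictOf le' r' r} ∪ (Q1' \ C)) (M.delta q σ) ∧
      ¬ PosBool.Sat ({r' | r' ∈ C ∩ Q1' ∧ StrictOf le' r' r} ∪ (Q1' \ C)) (M.delta q' σ))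

/-- Rule R2' for an accepting SCC `C`, letter `σ`, sets `Q₁, Q₁'` and preorders `le, le'`. -/
def RuleR2 {α : Type v} {Q : Type u} (M : ABA α Q) (C : Set Q) (σ : α)
    (Q1 Q1' : Set Q) (le le' : Q → Q → Prop) : Prop :=
  ∀ q ∈ C \ Q1, ∀ q' ∈ C \ Q1,
    (StrictOf le q q' ↔ ∃ r ∈ C \ Q1',
      PosBool.Sat ({r' | r' ∈ C \ Q1' ∧ StrictOf le' r' r} ∪ (Q1' ∪ C)ᶜ) (M.dual.delta q σ) ∧
      ¬ PosBool.Sat ({r' | r' ∈ C \ Q1' ∧ StrictOf le' r' r} ∪ (Q1' ∪ C)ᶜ) (M.dual.delta q' σ))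

/-- Consistency of a sequence of families of total preorders (Rules R1' and R2'). -/
def ConsistentPre {α : Type v} {Q : Type u} (M : ABA α Q) (w : ℕ → α)
    (QS : ℕ → Set Q) (pre : ℕ → Set Q → Q → Q → Prop) : Prop :=
  ∀ i C, M.IsSCC C →
    (C ⊆ M.RejPart →
      IsTotalPreorderOn (C ∩ QS i) (pre i C) ∧
      RuleR1 M C (w i) (QS i) (QS (i + 1)) (pre i C) (pre (i + 1) C)) ∧
    (C ⊆ M.AccPart →
      IsTotalPreorderOn (C \ QS i) (pre i C) ∧
      RuleR2 M C (w i) (QS i) (QS (i + 1)) (pre i C) (pre (i + 1) C))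

/-- Macrostates of the `B_u` construction: `(Q₁, Q₂, {⪯_C}_{C∈S}, S, D)`. -/
abbrev BuState (Q : Type u) := Set Q × Set Q × (Set Q → Q → Q → Prop) × Set Q × Set Q

def BuState.q1 {Q : Type u} (m : BuState Q) : Set Q := m.1
def BuState.q2 {Q : Type u} (m : BuState Q) : Set Q := m.2.1
def BuState.pre {Q : Type u} (m : BuState Q) : Set Q → Q → Q → Prop := m.2.2.1
def BuState.sS {Q : Type u} (m : BuState Q) : Set Q := m.2.2.2.1
def BuState.dD {Q : Type u} (m : BuState Q) : Set Q := m.2.2.2.2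

/-- Well-formedness of a `B_u` macrostate. -/
def BuWF {α : Type v} {Q : Type u} (M : ABA α Q) (m : BuState Q) : Prop :=
  m.q2 = m.q1ᶜ ∧
  (∀ C, M.IsSCC C →
    (C ⊆ M.RejPart → IsTotalPreorderOn (m.q1 ∩ C) (m.pre C)) ∧
    (C ⊆ M.AccPart → IsTotalPreorderOn (m.q2 ∩ C) (m.pre C))) ∧
  (∀ C, ¬ M.IsSCC C → m.pre C = fun _ _ => False) ∧
  M.IsSCC m.sS ∧
  (m.sS ⊆ M.RejPart → DownClosed (m.pre m.sS) (m.q1 ∩ m.sS) m.dD) ∧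
  (m.sS ⊆ M.AccPart → DownClosed (m.pre m.sS) (m.q2 ∩ m.sS) m.dD)

/-- The NBA `B_u` constructed from an AWA `M`, a round-robin successor `next` on SCCs
and an initial SCC `C₀`. -/
def Bu {α : Type v} {Q : Type u} (M : ABA α Q) (next : Set Q → Set Q) (C0 : Set Q) :
    NBA α (BuState Q) where
  init := {m | BuWF M m ∧ M.init ∈ m.q1 ∧ m.sS = C0 ∧ m.dD = ∅}
  delta := fun m σ =>
    {m' | BuWF M m ∧ BuWF M m' ∧
      (∀ s ∈ m.q1, PosBool.Sat m'.q1 (M.delta s σ)) ∧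
      (∀ s ∈ m.q2, PosBool.Sat m'.q2 (M.dual.delta s σ)) ∧
      (∀ C, M.IsSCC C →
        (C ⊆ M.RejPart → RuleR1 M C σ m.q1 m'.q1 (m.pre C) (m'.pre C)) ∧
        (C ⊆ M.AccPart → RuleR2 M C σ m.q1 m'.q1 (m.pre C) (m'.pre C))) ∧
      (m.dD = ∅ → m'.sS = next m.sS ∧
        (m'.sS ⊆ M.RejPart → m'.dD = m'.q1 ∩ m'.sS) ∧
        (m'.sS ⊆ M.AccPart → m'.dD = m'.q2 ∩ m'.sS)) ∧
      (m.dD ≠ ∅ → m'.sS = m.sS ∧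
        (m.sS ⊆ M.RejPart →
          (∀ s ∈ m.dD, PosBool.Sat (m'.dD ∪ (m'.q1 \ m.sS)) (M.delta s σ)) ∧
          (∀ D'', DownClosed (m'.pre m.sS) (m'.q1 ∩ m.sS) D'' →
            (∀ s ∈ m.dD, PosBool.Sat (D'' ∪ (m'.q1 \ m.sS)) (M.delta s σ)) → m'.dD ⊆ D'')) ∧
        (m.sS ⊆ M.AccPart →
          (∀ s ∈ m.dD, PosBool.Sat (m'.dD ∪ (m'.q2 \ m.sS)) (M.dual.delta s σ)) ∧
          (∀ D'', DownClosed (m'.pre m.sS) (m'.q2 ∩ m.sS) D'' →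
            (∀ s ∈ m.dD, PosBool.Sat (D'' ∪ (m'.q2 \ m.sS)) (M.dual.delta s σ)) → m'.dD ⊆ D'')))}
  acc := {m | BuWF M m ∧ m.dD = ∅}

/-- Macrostates of the `U` construction: `(Q₁, Q₂, ⪯_C, C, D)`. -/
abbrev UState (Q : Type u) := Set Q × Set Q × (Q → Q → Prop) × Set Q × Set Q

def UState.q1 {Q : Type u} (m : UState Q) : Set Q := m.1
def UState.q2 {Q : Type u} (m : UState Q) : Set Q := m.2.1
def UState.pre {Q : Type u} (m : UState Q) : Q → Q → Prop := m.2.2.1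
def UState.cC {Q : Type u} (m : UState Q) : Set Q := m.2.2.2.1
def UState.dD {Q : Type u} (m : UState Q) : Set Q := m.2.2.2.2

/-- Well-formedness of a `U` macrostate. -/
def UWF {α : Type v} {Q : Type u} (M : ABA α Q) (m : UState Q) : Prop :=
  m.q2 = m.q1ᶜ ∧ M.IsSCC m.cC ∧
  (m.cC ⊆ M.RejPart →
    IsTotalPreorderOn (m.q1 ∩ m.cC) m.pre ∧
    (m.dD = m.q1 ∩ m.cC ∨ m.dD = (m.q1 ∩ m.cC) \ MaxSet m.pre (m.q1 ∩ m.cC))) ∧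
  (m.cC ⊆ M.AccPart →
    IsTotalPreorderOn (m.q2 ∩ m.cC) m.pre ∧
    (m.dD = m.q2 ∩ m.cC ∨ m.dD = (m.q2 ∩ m.cC) \ MaxSet m.pre (m.q2 ∩ m.cC)))

/-- The NBA `U` constructed from an AWA `M`, a round-robin successor `next` on SCCs
and an initial SCC `C₀`. -/
def Uaut {α : Type v} {Q : Type u} (M : ABA α Q) (next : Set Q → Set Q) (C0 : Set Q) :
    NBA α (UState Q) where
  init := {m | UWF M m ∧ M.init ∈ m.q1 ∧ m.cC = C0 ∧ m.dD = ∅}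
  delta := fun m σ =>
    {m' | UWF M m ∧ UWF M m' ∧
      (∀ s ∈ m.q1, PosBool.Sat m'.q1 (M.delta s σ)) ∧
      (∀ s ∈ m.q2, PosBool.Sat m'.q2 (M.dual.delta s σ)) ∧
      (m.dD = ∅ → m'.cC = next m.cC ∧
        (m'.cC ⊆ M.RejPart → m'.dD = m'.q1 ∩ m'.cC) ∧
        (m'.cC ⊆ M.AccPart → m'.dD = m'.q2 ∩ m'.cC)) ∧
      (m.dD ≠ ∅ → m'.cC = m.cC ∧
        (m.cC ⊆ M.RejPart →
          RuleR1 M m.cC σ m.q1 m'.q1 m.pre m'.pre ∧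
          DownClosed m'.pre (m'.q1 ∩ m.cC) m'.dD ∧
          (∀ s ∈ m.dD, PosBool.Sat (m'.dD ∪ (m'.q1 \ m.cC)) (M.delta s σ)) ∧
          (∀ D'', DownClosed m'.pre (m'.q1 ∩ m.cC) D'' →
            (∀ s ∈ m.dD, PosBool.Sat (D'' ∪ (m'.q1 \ m.cC)) (M.delta s σ)) → m'.dD ⊆ D'')) ∧
        (m.cC ⊆ M.AccPart →
          RuleR2 M m.cC σ m.q1 m'.q1 m.pre m'.pre ∧
          DownClosed m'.pre (m'.q2 ∩ m.cC) m'.dD ∧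
          (∀ s ∈ m.dD, PosBool.Sat (m'.dD ∪ (m'.q2 \ m.cC)) (M.dual.delta s σ)) ∧
          (∀ D'', DownClosed m'.pre (m'.q2 ∩ m.cC) D'' →
            (∀ s ∈ m.dD, PosBool.Sat (D'' ∪ (m'.q2 \ m.cC)) (M.dual.delta s σ)) → m'.dD ⊆ D'')))}
  acc := {m | UWF M m ∧ m.dD = ∅}

/-- `tpo n`: the number of total preorders on an `n`-element set. -/
noncomputable def tpo (n : ℕ) : ℕ :=
  Nat.card {r : Fin n → Fin n → Prop // Reflexive r ∧ Transitive r ∧ ∀ a b, r a b ∨ r b a}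

namespace PosBool

variable {Q : Type u}

lemma Sat.mono {X Y : Set Q} (h : X ⊆ Y) : ∀ {θ : PosBool Q}, Sat X θ → Sat Y θ
  | .tt, _ => trivial
  | .ff, hs => hs
  | .var _, hs => h hs
  | .band _ _, hs => ⟨Sat.mono h hs.1, Sat.mono h hs.2⟩
  | .bor _ _, hs => hs.imp (Sat.mono h) (Sat.mono h)

lemma sat_dual (Y : Set Q) (θ : PosBool Q) : Sat Y θ.dual ↔ ¬ Sat Yᶜ θ := by
  induction θ with
  | tt => simp [Sat, dual]
  | ff => simp [Sat, dual]
  | var q => simp [Sat, dual]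
  | band θ₁ θ₂ h₁ h₂ => simp only [Sat, dual, h₁, h₂]; tauto
  | bor θ₁ θ₂ h₁ h₂ => simp only [Sat, dual, h₁, h₂]; tauto

/-- A model of a formula and a model of its dual share a state occurring in the formula. -/
lemma exists_common {X Y : Set Q} {θ : PosBool Q} (hX : Sat X θ) (hY : Sat Y θ.dual) :
    ∃ q, q ∈ X ∧ q ∈ Y ∧ q ∈ θ.vars := by
  induction θ with
  | tt => exact hY.elim
  | ff => exact hX.elim
  | var q => exact ⟨q, hX, hY, rfl⟩
  | band θ₁ θ₂ h₁ h₂ =>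
    rcases hY with hY | hY
    · obtain ⟨q, a, b, c⟩ := h₁ hX.1 hY
      exact ⟨q, a, b, Or.inl c⟩
    · obtain ⟨q, a, b, c⟩ := h₂ hX.2 hY
      exact ⟨q, a, b, Or.inr c⟩
  | bor θ₁ θ₂ h₁ h₂ =>
    rcases hX with hX | hX
    · obtain ⟨q, a, b, c⟩ := h₁ hX hY.1
      exact ⟨q, a, b, Or.inl c⟩
    · obtain ⟨q, a, b, c⟩ := h₂ hX hY.2
      exact ⟨q, a, b, Or.inr c⟩

end PosBool

namespace ABA

open PosBool

variable {α : Type v} {Q : Type u}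

/-! ### Attractors and the winning family -/

/-- `M.att w P n i` is the set of states in `P i` from which, reading `w` from position `i`, an
accepting state can be forced within `n` steps on every branch, without leaving the family `P`
before that. -/
def att (M : ABA α Q) (w : ℕ → α) (P : ℕ → Set Q) : ℕ → ℕ → Set Q
  | 0, i => P i ∩ M.acc
  | n + 1, i => M.att w P n i ∪ {q | q ∈ P i ∧ Sat (M.att w P n (i + 1)) (M.delta q (w i))}

/-- A family of sets of states is progressive along `w` if each level satisfies the transitions
of the previous one, and every state of the family can force a visit to an accepting state inside
the family. -/
def Prog (M : ABA α Q) (w : ℕ → α) (P : ℕ → Set Q) : Prop :=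
  ∀ i, ∀ q ∈ P i, Sat (P (i + 1)) (M.delta q (w i)) ∧ ∃ n, q ∈ M.att w P n i

/-- The largest progressive family along `w`, defined as the union of all of them. -/
def winSet (M : ABA α Q) (w : ℕ → α) (i : ℕ) : Set Q := {q | ∃ P, M.Prog w P ∧ q ∈ P i}

variable {M : ABA α Q} {w : ℕ → α} {P P' : ℕ → Set Q}

lemma att_subset (n i : ℕ) : M.att w P n i ⊆ P i := by
  induction n with
  | zero => exact fun q h => h.1
  | succ n ih => exact fun q h => h.elim (fun h => ih h) (fun h => h.1)

lemma att_mono_step {m n : ℕ} (h : m ≤ n) (i : ℕ) : M.att w P m i ⊆ M.att w P n i := by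
  induction n, h using Nat.le_induction with
  | base => exact subset_rfl
  | succ n _ ih => exact fun q hq => Or.inl (ih hq)

lemma att_mono (h : ∀ i, P i ⊆ P' i) (n i : ℕ) : M.att w P n i ⊆ M.att w P' n i := by
  induction n generalizing i with
  | zero => exact fun q hq => ⟨h i hq.1, hq.2⟩
  | succ n ih =>
    exact fun q hq => Or.imp (fun hq => ih i hq)
      (fun hq => ⟨h i hq.1, hq.2.mono (ih (i + 1))⟩) hq

lemma sat_att_pred {n i : ℕ} {q : Q} (hq : q ∈ M.att w P n i) (hF : q ∉ M.acc) :
    Sat (M.att w P (n - 1) (i + 1)) (M.delta q (w i)) := by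
  induction n with
  | zero => exact (hF hq.2).elim
  | succ n ih =>
    rcases hq with hq | hq
    · exact (ih hq).mono (att_mono_step (by omega) _)
    · exact hq.2

/-- As `Q` is finite, the attractor is reached after finitely many steps. -/
lemma exists_att_bound [Finite Q] {X : Set Q} {i : ℕ} (h : ∀ q ∈ X, ∃ n, q ∈ M.att w P n i) :
    ∃ N, X ⊆ M.att w P N i := by
  have h' : ∀ q, ∃ n, q ∈ X → q ∈ M.att w P n i := fun q => by
    by_cases hq : q ∈ X
    · obtain ⟨n, hn⟩ := h q hq
      exact ⟨n, fun _ => hn⟩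
    · exact ⟨0, fun h => (hq h).elim⟩
  choose f hf using h'
  obtain ⟨N, hN⟩ := (Set.finite_range f).bddAbove
  exact ⟨N, fun q hq => att_mono_step (hN ⟨q, rfl⟩) i (hf q hq)⟩

lemma Prog.subset_winSet (h : M.Prog w P) (i : ℕ) : P i ⊆ M.winSet w i :=
  fun _ hq => ⟨P, h, hq⟩

lemma prog_winSet : M.Prog w (M.winSet w) := by
  rintro i q ⟨P, hP, hq⟩
  obtain ⟨h, n, hn⟩ := hP i q hq
  exact ⟨h.mono (hP.subset_winSet _), n, att_mono hP.subset_winSet n i hn⟩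

lemma mem_winSet_of_sat [Finite Q] {i : ℕ} {q : Q}
    (h : Sat (M.winSet w (i + 1)) (M.delta q (w i))) : q ∈ M.winSet w i := by
  let P : ℕ → Set Q := fun j => M.winSet w j ∪ {p | Sat (M.winSet w (j + 1)) (M.delta p (w j))}
  have hsub : ∀ j, M.winSet w j ⊆ P j := fun j => Set.subset_union_left
  have hP : M.Prog w P := by
    rintro j p (hp | hp)
    · obtain ⟨h, n, hn⟩ := prog_winSet j p hp
      exact ⟨h.mono (hsub _), n, att_mono hsub n j hn⟩
    · obtain ⟨N, hN⟩ := exists_att_bound fun q hq => (prog_winSet (M := M) (w := w) (j + 1) q hq).2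
      exact ⟨hp.mono (hsub _), N + 1,
        Or.inr ⟨Or.inr hp, hp.mono (hN.trans (att_mono hsub N (j + 1)))⟩⟩
  exact hP.subset_winSet i (Or.inr h)

/-- Determinacy: the complement of the winning family is progressive for the dual automaton. -/
lemma prog_dual_winSet_compl [Finite Q] :
    M.dual.Prog w (fun i => (M.winSet w i)ᶜ) := by
  intro i q hq
  refine ⟨(sat_dual _ _).2 fun h => hq (mem_winSet_of_sat (by rwa [compl_compl] at h)), ?_⟩
  by_contra hno
  -- The family of all states outside the dual attractor extends `M.winSet w`; its additional
  -- members are accepting, so it is progressive.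
  let B : ℕ → Set Q := fun j => {p | ∃ n, p ∈ M.dual.att w (fun i => (M.winSet w i)ᶜ) n j}
  have hsub : ∀ j, M.winSet w j ⊆ (B j)ᶜ := by
    rintro j p hp ⟨n, hn⟩
    exact att_subset n j hn hp
  have hP : M.Prog w (fun j => (B j)ᶜ) := by
    intro j p hp
    by_cases hT : p ∈ M.winSet w j
    · obtain ⟨h, n, hn⟩ := prog_winSet j p hT
      exact ⟨h.mono (hsub _), n, att_mono hsub n j hn⟩
    · refine ⟨?_, 0, hp, ?_⟩
      · by_contra hs
        obtain ⟨N, hN⟩ := exists_att_bound (X := B (j + 1)) fun q hq => hq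
        exact hp ⟨N + 1, Or.inr ⟨hT, ((sat_dual _ _).2 hs).mono hN⟩⟩
      · by_contra hF
        exact hp ⟨0, hT, hF⟩
  exact hq (hP.subset_winSet i hno)

/-! ### Run DAGs -/

/-- The breakpoint argument. The run DAG has vertex levels `T`. The set `R` collects the states
on branches still owing a visit to an accepting state since the last breakpoint, and their
successors are confined to the sets `Y`; all debts are paid at each breakpoint. -/
lemma accepts_of_breakpoints {T R : ℕ → Set Q} {bp : ℕ → Prop}
    (hT : ∀ i, ∀ s ∈ T i, Sat (T (i + 1)) (M.delta s (w i)))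
    (hinf : ∀ n, ∃ m, n ≤ m ∧ bp m)
    (hbp : ∀ i, bp i → R i = ∅ ∧ R (i + 1) = T (i + 1) \ M.acc)
    (hstep : ∀ i, ¬ bp i → ∃ Y ⊆ T (i + 1), (∀ s ∈ R i, Sat Y (M.delta s (w i))) ∧
      R (i + 1) = Y \ M.acc)
    {s : Q} (hs : s ∈ T 0) : w ∈ (M.setInit s).lang := by
  have hY : ∀ i, ∃ Y ⊆ T (i + 1), (∀ s ∈ R i, Sat Y (M.delta s (w i))) ∧
      R (i + 1) = Y \ M.acc := fun i => by
    by_cases h : bp i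
    · refine ⟨T (i + 1), subset_rfl, fun s hs => ?_, (hbp i h).2⟩
      rw [(hbp i h).1] at hs
      exact hs.elim
    · exact hstep i h
  choose Y hYT hYs hYR using hY
  let G : (M.setInit s).RunDAG w :=
    { V := T
      E := fun ℓ q q' => q ∈ T ℓ ∧ q' ∈ T (ℓ + 1) ∧ (q ∈ R ℓ → q' ∈ Y ℓ)
      init_mem := hs
      edge_src := fun _ _ _ h => h.1
      edge_tgt := fun _ _ _ h => h.2.1
      sat := fun ℓ q hq => by
        by_cases hR : q ∈ R ℓ
        · refine Sat.mono ?_ (hYs ℓ q hR)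
          exact fun q' h => ⟨hq, hYT ℓ h, fun _ => h⟩
        · refine Sat.mono ?_ (hT ℓ q hq)
          exact fun q' h => ⟨hq, h, fun h' => (hR h').elim⟩ }
  refine ⟨G, fun b hb n => ?_⟩
  by_contra! hno
  obtain ⟨m, hm, hbm⟩ := hinf n
  -- A branch that avoids accepting states from the breakpoint `m` on stays in `R` forever.
  have key : ∀ k, m + 1 ≤ k → b k ∈ R k := by
    intro k hk
    induction k, hk using Nat.le_induction with
    | base =>
      rw [(hbp m hbm).2]
      exact ⟨(hb.2 m).2.1, hno _ (by omega)⟩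
    | succ k hk ih =>
      rw [hYR k]
      exact ⟨(hb.2 k).2.2 ih, hno _ (by omega)⟩
  obtain ⟨m', hm', hbm'⟩ := hinf (m + 1)
  have := key m' hm'
  rw [(hbp m' hbm').1] at this
  exact this

/-- On a path of a weak automaton, accepting and rejecting states do not both recur. -/
lemma IsWeak.not_both [Finite Q] (hweak : M.IsWeak) {b : ℕ → Q}
    (hb : ∀ i, M.edge (b i) (b (i + 1)))
    (h₁ : ∀ n, ∃ m, n ≤ m ∧ b m ∈ M.acc) (h₂ : ∀ n, ∃ m, n ≤ m ∧ b m ∉ M.acc) : False := by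
  have hreach : ∀ i j, i ≤ j → M.reach (b i) (b j) := by
    intro i j hij
    induction j, hij using Nat.le_induction with
    | base => exact .refl
    | succ j _ ih => exact ih.tail (hb j)
  -- Some accepting state recurs, by the pigeonhole principle.
  have hf : ∃ f ∈ M.acc, ∀ n, ∃ m, n ≤ m ∧ b m = f := by
    by_contra! hno
    have : ∀ f, ∃ n, f ∈ M.acc → ∀ m, n ≤ m → b m ≠ f := fun f => by
      by_cases hf : f ∈ M.acc
      · obtain ⟨n, hn⟩ := hno f hf
        exact ⟨n, fun _ => hn⟩
      · exact ⟨0, fun h => (hf h).elim⟩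
    choose g hg using this
    obtain ⟨N, hN⟩ := (Set.finite_range g).bddAbove
    obtain ⟨m, hm, hbm⟩ := h₁ N
    exact hg (b m) hbm m ((hN ⟨b m, rfl⟩).trans hm) rfl
  obtain ⟨f, hf, hrec⟩ := hf
  obtain ⟨m₁, -, e₁⟩ := hrec 0
  obtain ⟨k, hk, hbk⟩ := h₂ m₁
  obtain ⟨m₂, hm₂, e₂⟩ := hrec k
  have r₁ := hreach _ _ hk
  have r₂ := hreach _ _ hm₂
  rw [e₁] at r₁
  rw [e₂] at r₂
  rcases hweak f with h | h
  · exact hbk (h ⟨r₁, r₂⟩)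
  · exact Set.eq_empty_iff_forall_notMem.1 h f ⟨⟨.refl, .refl⟩, hf⟩

/-- Duality excludes double acceptance: the common branch of two run DAGs follows, at each level,
a state shared by a model of the transition formula and a model of its dual. -/
lemma dual_disjoint [Finite Q] (hweak : M.IsWeak) {s : Q} (h₁ : w ∈ (M.setInit s).lang)
    (h₂ : w ∈ (M.dual.setInit s).lang) : False := by
  obtain ⟨G, hG⟩ := h₁
  obtain ⟨H, hH⟩ := h₂
  have hstep : ∀ ℓ q, q ∈ G.V ℓ ∧ q ∈ H.V ℓ → ∃ q', G.E ℓ q q' ∧ H.E ℓ q q' ∧ M.edge q q' := by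
    rintro ℓ q ⟨hq, hq'⟩
    obtain ⟨q', a, b, c⟩ := exists_common (G.sat ℓ q hq) (H.sat ℓ q hq')
    exact ⟨q', a, b, w ℓ, c⟩
  choose! f hfG hfH hfe using hstep
  let b : ℕ → Q := fun n => Nat.rec s (fun ℓ q => f ℓ q) n
  have hmem : ∀ ℓ, b ℓ ∈ G.V ℓ ∧ b ℓ ∈ H.V ℓ := by
    intro ℓ
    induction ℓ with
    | zero => exact ⟨G.init_mem, H.init_mem⟩
    | succ ℓ ih => exact ⟨G.edge_tgt _ _ _ (hfG ℓ _ ih), H.edge_tgt _ _ _ (hfH ℓ _ ih)⟩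
  exact hweak.not_both (b := b) (fun ℓ => hfe ℓ _ (hmem ℓ))
    (hG b ⟨rfl, fun ℓ => hfG ℓ _ (hmem ℓ)⟩) (hH b ⟨rfl, fun ℓ => hfH ℓ _ (hmem ℓ)⟩)

end ABA

/-! ### Macroruns of the Bustan–Rubin–Vardi automaton -/

open PosBool

/-- Each component of an accepting macrorun, with its own breakpoint set, induces accepting run
DAGs. -/
lemma brv_sound {α : Type v} {Q : Type u} {M : ABA α Q} {w : ℕ → α} {S Q3 Q4 : Set Q}
    (h : w ∈ ((BRV M).fromState (S, Sᶜ, Q3, Q4)).lang) :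
    (∀ s ∈ S, w ∈ (M.setInit s).lang) ∧ (∀ s ∈ Sᶜ, w ∈ (M.dual.setInit s).lang) := by
  obtain ⟨ρ, ⟨h0, hs⟩, hacc⟩ := h
  have h0 : ρ 0 = (S, Sᶜ, Q3, Q4) := h0
  have hinf : ∀ n, ∃ m, n ≤ m ∧ ((ρ m).2.2.1 = ∅ ∧ (ρ m).2.2.2 = ∅) := fun n => by
    obtain ⟨m, hm, h⟩ := hacc n
    exact ⟨m, hm, h.2⟩
  have hbp : ∀ i, (ρ i).2.2.1 = ∅ ∧ (ρ i).2.2.2 = ∅ →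
      (ρ (i + 1)).2.2.1 = (ρ (i + 1)).1 \ M.acc ∧
      (ρ (i + 1)).2.2.2 = (ρ (i + 1)).2.1 \ M.dual.acc := by
    rintro i ⟨h3, h4⟩
    rcases (hs i).2.2.2.2 with h | h
    · exact h.2.2
    · exact (h.1.elim (· h3) (· h4)).elim
  have hstep : ∀ i, ¬ ((ρ i).2.2.1 = ∅ ∧ (ρ i).2.2.2 = ∅) →
      (∃ Y₃ ⊆ (ρ (i + 1)).1, (∀ s ∈ (ρ i).2.2.1, PosBool.Sat Y₃ (M.delta s (w i))) ∧
        (ρ (i + 1)).2.2.1 = Y₃ \ M.acc) ∧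
      (∃ Y₄ ⊆ (ρ (i + 1)).2.1, (∀ s ∈ (ρ i).2.2.2, PosBool.Sat Y₄ (M.dual.delta s (w i))) ∧
        (ρ (i + 1)).2.2.2 = Y₄ \ M.dual.acc) := by
    intro i hn
    rcases (hs i).2.2.2.2 with h | h
    · exact (hn ⟨h.1, h.2.1⟩).elim
    · exact h.2
  constructor
  · intro s hsS
    exact ABA.accepts_of_breakpoints (T := fun i => (ρ i).1) (R := fun i => (ρ i).2.2.1)
      (fun i => (hs i).2.2.1) hinf (fun i h => ⟨h.1, (hbp i h).1⟩)
      (fun i h => (hstep i h).1) (by simpa only [h0] using hsS)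
  · intro s hsS
    exact ABA.accepts_of_breakpoints (T := fun i => (ρ i).2.1) (R := fun i => (ρ i).2.2.2)
      (fun i => (hs i).2.2.2.1) hinf (fun i h => ⟨h.2, (hbp i h).2⟩)
      (fun i h => (hstep i h).2) (by simpa only [h0] using hsS)

open Classical in
/-- The countdown and the two breakpoint sets along the macrorun through the winning family.
At a breakpoint the sets are refilled and the countdown at level `i` is reset to the attractor
bound `N i`; otherwise the sets follow the attractors one step down. -/
noncomputable def brvTrack {α : Type v} {Q : Type u} (M : ABA α Q) (w : ℕ → α) (N : ℕ → ℕ)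
    (Q3 Q4 : Set Q) : ℕ → ℕ × Set Q × Set Q
  | 0 => (N 0, Q3, Q4)
  | i + 1 =>
    let x := brvTrack M w N Q3 Q4 i
    if x.2.1 = ∅ ∧ x.2.2 = ∅ then
      (N (i + 1), M.winSet w (i + 1) \ M.acc, (M.winSet w (i + 1))ᶜ \ M.dual.acc)
    else
      (x.1 - 1, M.att w (M.winSet w) (x.1 - 1) (i + 1) \ M.acc,
        M.dual.att w (fun j => (M.winSet w j)ᶜ) (x.1 - 1) (i + 1) \ M.dual.acc)

/-- From the winning set and its complement there is an accepting macrorun, whatever the initial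
breakpoint sets. -/
lemma exists_macrorun {α : Type v} {Q : Type u} [Finite Q] (M : ABA α Q) (w : ℕ → α)
    {Q3 Q4 : Set Q} (h3 : Q3 ⊆ M.winSet w 0 \ M.acc)
    (h4 : Q4 ⊆ (M.winSet w 0)ᶜ \ M.dual.acc) :
    w ∈ ((BRV M).fromState (M.winSet w 0, (M.winSet w 0)ᶜ, Q3, Q4)).lang := by
  set T := M.winSet w
  have hTp : M.Prog w T := ABA.prog_winSet
  have hUp : M.dual.Prog w (fun j => (T j)ᶜ) := ABA.prog_dual_winSet_compl
  have hN : ∀ i, ∃ N, T i ⊆ M.att w T N i ∧ (T i)ᶜ ⊆ M.dual.att w (fun j => (T j)ᶜ) N i := by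
    intro i
    obtain ⟨a, ha⟩ := ABA.exists_att_bound fun q hq => (hTp i q hq).2
    obtain ⟨b, hb⟩ := ABA.exists_att_bound fun q hq => (hUp i q hq).2
    exact ⟨max a b, ha.trans (ABA.att_mono_step (le_max_left _ _) i),
      hb.trans (ABA.att_mono_step (le_max_right _ _) i)⟩
  choose N hNT hNU using hN
  let x := brvTrack M w N Q3 Q4
  have hx1 : ∀ i, (x i).2.1 = ∅ ∧ (x i).2.2 = ∅ →
      x (i + 1) = (N (i + 1), T (i + 1) \ M.acc, (T (i + 1))ᶜ \ M.dual.acc) :=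
    fun i h => if_pos h
  have hx2 : ∀ i, ¬ ((x i).2.1 = ∅ ∧ (x i).2.2 = ∅) →
      x (i + 1) = ((x i).1 - 1, M.att w T ((x i).1 - 1) (i + 1) \ M.acc,
        M.dual.att w (fun j => (T j)ᶜ) ((x i).1 - 1) (i + 1) \ M.dual.acc) :=
    fun i h => if_neg h
  have hinv : ∀ i, (x i).2.1 ⊆ M.att w T (x i).1 i \ M.acc ∧
      (x i).2.2 ⊆ M.dual.att w (fun j => (T j)ᶜ) (x i).1 i \ M.dual.acc := by
    intro i
    cases i with
    | zero => exact ⟨fun q hq => ⟨hNT 0 (h3 hq).1, (h3 hq).2⟩,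
        fun q hq => ⟨hNU 0 (h4 hq).1, (h4 hq).2⟩⟩
    | succ i =>
      by_cases h : (x i).2.1 = ∅ ∧ (x i).2.2 = ∅
      · rw [hx1 i h]
        exact ⟨Set.sdiff_subset_sdiff_left (hNT _), Set.sdiff_subset_sdiff_left (hNU _)⟩
      · rw [hx2 i h]
        exact ⟨subset_rfl, subset_rfl⟩
  let ρ : ℕ → BRVState Q := fun i => (T i, (T i)ᶜ, (x i).2.1, (x i).2.2)
  have hcons : ∀ i, BRVConsistent M (ρ i) := fun i =>
    ⟨rfl, (hinv i).1.trans (Set.sdiff_subset_sdiff_left (ABA.att_subset _ _)),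
      (hinv i).2.trans (Set.sdiff_subset_sdiff_left (ABA.att_subset _ _))⟩
  refine ⟨ρ, ⟨rfl, fun i => ⟨hcons i, hcons (i + 1), fun s hs => (hTp i s hs).1,
    fun s hs => (hUp i s hs).1, ?_⟩⟩, fun n => ?_⟩
  · by_cases h : (x i).2.1 = ∅ ∧ (x i).2.2 = ∅
    · refine Or.inl ⟨h.1, h.2, ?_, ?_⟩
      · change (x (i + 1)).2.1 = _
        rw [hx1 i h]
      · change (x (i + 1)).2.2 = _
        rw [hx1 i h]
    · refine Or.inr ⟨not_and_or.1 h,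
        ⟨M.att w T ((x i).1 - 1) (i + 1), ABA.att_subset _ _, fun s hs => ?_, ?_⟩,
        ⟨M.dual.att w (fun j => (T j)ᶜ) ((x i).1 - 1) (i + 1), ABA.att_subset _ _,
          fun s hs => ?_, ?_⟩⟩
      · exact ABA.sat_att_pred ((hinv i).1 hs).1 ((hinv i).1 hs).2
      · change (x (i + 1)).2.1 = _
        rw [hx2 i h]
      · exact ABA.sat_att_pred ((hinv i).2 hs).1 ((hinv i).2 hs).2
      · change (x (i + 1)).2.2 = _
        rw [hx2 i h]
  · by_contra! hno
    have hno' : ∀ m, n ≤ m → ¬ ((x m).2.1 = ∅ ∧ (x m).2.2 = ∅) :=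
      fun m hm h => hno m hm ⟨hcons m, h⟩
    have hdec : ∀ k, (x (n + k)).1 = (x n).1 - k := by
      intro k
      induction k with
      | zero => rfl
      | succ k ih =>
        rw [← add_assoc, hx2 _ (hno' _ (by omega)), ih]
        omega
    -- When the countdown reaches zero, both breakpoint sets consist of states that are at once
    -- accepting and rejecting.
    have hzero : (x (n + (x n).1)).1 = 0 := by rw [hdec]; omega
    have hi := hinv (n + (x n).1)
    rw [hzero] at hi
    exact hno' _ (Nat.le_add_right _ _)
      ⟨Set.eq_empty_of_forall_notMem fun q hq => (hi.1 hq).2 (hi.1 hq).1.2,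
        Set.eq_empty_of_forall_notMem fun q hq => (hi.2 hq).2 (hi.2 hq).1.2⟩

/-- the language of the BRV automaton from macrostate `(S, Q∖S, Q₃, Q₄)`. -/
theorem brv_macrostate_lang {α Q : Type} [Fintype α] [Fintype Q] (M : ABA α Q)
    (hweak : M.IsWeak) (hcomp : M.Complete) :
    ∀ (S Q3 Q4 : Set Q), Q3 ⊆ S \ M.acc → Q4 ⊆ Sᶜ \ M.dual.acc →
      ((BRV M).fromState (S, Sᶜ, Q3, Q4)).lang =
        (⋂ s ∈ S, (M.setInit s).lang) ∩ (⋂ s ∈ Sᶜ, (M.dual.setInit s).lang) := by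
  intro S Q3 Q4 h3 h4
  ext w
  simp only [Set.mem_inter_iff, Set.mem_iInter]
  refine ⟨brv_sound, fun ⟨hS, hSc⟩ => ?_⟩
  have hT := brv_sound (exists_macrorun M w (Set.empty_subset _) (Set.empty_subset _))
  have hST : S = M.winSet w 0 := by
    ext s
    constructor
    · intro hs
      by_contra hn
      exact ABA.dual_disjoint hweak (hS s hs) (hT.2 s hn)
    · intro hs
      by_contra hn
      exact ABA.dual_disjoint hweak (hT.1 s hs) (hSc s hn)
  subst hST
  exact exists_macrorun M w h3 h4
end

section
/- Let A be an AWA and B the Bustan–Rubin–Vardi NBA constructed from A. For any two macrostates (Q₁,Q₂,Q₃,Q₄) and (Q₁',Q₂',Q₃',Q₄') of B: if Q₁ ≠ Q₁' then L(B^{(Q₁,Q₂,Q₃,Q₄)}) ∩ L(B^{(Q₁',Q₂',Q₃',Q₄')}) = ∅, and if Q₁ = Q₁' then L(B^{(Q₁,Q₂,Q₃,Q₄)}) = L(B^{(Q₁',Q₂',Q₃',Q₄')}). -/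
/-!
Fix two accepting macroruns `ρ`, `ρ'` of the BRV automaton over the same word `w`.

*Disjointness.* If some state lies in `Q₁` of `ρ 0` and in `Q₂` of `ρ' 0`, then a path through the
underlying graph can be followed that stays in `Q₁` along `ρ` and in `Q₂` along `ρ'`: a set
satisfying a formula and a set satisfying its dual share a state occurring in the formula
(`PosBool.exists_mem_of_sat_dual`). The steps can be chosen to respect the sets `Y₃` of `ρ` and `Y₄`
of `ρ'`, so each breakpoint of `ρ` forces a visit to `F`, and each breakpoint of `ρ'` forces a visit
to `Q ∖ F` (`visits_of_breakpoints`). As `Q` is finite, some accepting and some rejecting state both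
recur on this path; they lie in one SCC, against weakness (`ABA.IsWeak.no_alternating_path`). Hence
accepting macroruns over the same word start with the same `Q₁`.

*Equality.* Let `ρ` be an accepting macrorun from `m`, let `m'` have the same first component and let
`i` be a breakpoint of `ρ`. Starting in `m'`, keep `Q₁, Q₂` of `ρ` and, up to level `i`, the maximal
sets `Q₃ = Q₁ ∖ F`, `Q₄ = Q₂ ∖ F̂`. A step to maximal sets is always allowed. At level `i + 1`
the macrorun `ρ` itself has maximal `Q₃, Q₄`, so from there on `ρ` can be followed.
-/

universe u v

/-! ### Duality of positive Boolean formulas -/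

namespace PosBool

variable {Q : Type u}

theorem exists_mem_of_sat_dual {X Y : Set Q} :
    ∀ θ : PosBool Q, Sat X θ → Sat Y θ.dual → ∃ q ∈ vars θ, q ∈ X ∧ q ∈ Y
  | .tt, _, h => h.elim
  | .ff, h, _ => h.elim
  | .var q, hX, hY => ⟨q, rfl, hX, hY⟩
  | .band θ₁ θ₂, hX, hY => by
      rcases hY with hY | hY
      · obtain ⟨q, hq, h⟩ := exists_mem_of_sat_dual θ₁ hX.1 hY
        exact ⟨q, Or.inl hq, h⟩
      · obtain ⟨q, hq, h⟩ := exists_mem_of_sat_dual θ₂ hX.2 hY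
        exact ⟨q, Or.inr hq, h⟩
  | .bor θ₁ θ₂, hX, hY => by
      rcases hX with hX | hX
      · obtain ⟨q, hq, h⟩ := exists_mem_of_sat_dual θ₁ hX hY.1
        exact ⟨q, Or.inl hq, h⟩
      · obtain ⟨q, hq, h⟩ := exists_mem_of_sat_dual θ₂ hX hY.2
        exact ⟨q, Or.inr hq, h⟩

end PosBool

/-! ### Paths in weak automata and the breakpoint argument -/

theorem ABA.reach_of_path {α : Type v} {Q : Type u} {M : ABA α Q} {b : ℕ → Q}
    (hb : ∀ i, M.edge (b i) (b (i + 1))) {i j : ℕ} (hij : i ≤ j) : M.reach (b i) (b j) := by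
  induction j, hij using Nat.le_induction with
  | base => exact Relation.ReflTransGen.refl
  | succ j _ ih => exact ih.tail (hb j)

/-- A set visited infinitely often by a sequence in a finite type has an element visited
infinitely often. -/
theorem exists_recurrent {Q : Type u} [Finite Q] (b : ℕ → Q) (S : Set Q)
    (h : ∀ n, ∃ k, n ≤ k ∧ b k ∈ S) : ∃ q ∈ S, ∀ n, ∃ k, n ≤ k ∧ b k = q := by
  by_contra! hc
  choose! N hN using hc
  obtain ⟨B, hB⟩ := (Set.finite_range N).bddAbove
  obtain ⟨k, hk, hS⟩ := h B
  exact hN (b k) hS k ((hB ⟨b k, rfl⟩).trans hk) rfl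

/-- A path in a finite weak automaton does not visit both `F` and its complement infinitely
often. -/
theorem ABA.IsWeak.no_alternating_path {α : Type v} {Q : Type u} [Finite Q] {M : ABA α Q}
    (hweak : M.IsWeak) {b : ℕ → Q} (hb : ∀ i, M.edge (b i) (b (i + 1)))
    (hF : ∀ n, ∃ k, n ≤ k ∧ b k ∈ M.acc) (hR : ∀ n, ∃ k, n ≤ k ∧ b k ∈ M.accᶜ) : False := by
  obtain ⟨p, hp, hpr⟩ := exists_recurrent b _ hF
  obtain ⟨q, hq, hqr⟩ := exists_recurrent b _ hR
  have reach_of_recurrent : ∀ {x y : Q}, (∀ n, ∃ k, n ≤ k ∧ b k = x) →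
      (∀ n, ∃ k, n ≤ k ∧ b k = y) → M.reach x y := by
    intro x y hx hy
    obtain ⟨i, _, rfl⟩ := hx 0
    obtain ⟨j, hij, rfl⟩ := hy i
    exact M.reach_of_path hb hij
  rcases hweak p with h | h
  · exact hq (h ⟨reach_of_recurrent hpr hqr, reach_of_recurrent hqr hpr⟩)
  · have hpp : p ∈ M.sccOf p ∩ M.acc :=
      ⟨⟨Relation.ReflTransGen.refl, Relation.ReflTransGen.refl⟩, hp⟩
    rw [h] at hpp
    exact hpp

/-- The breakpoint argument. The sets `O k` hold pending obligations, which a path discharges only by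
entering `G`. If the obligations run out infinitely often, and the path is put under obligation
again right after that, then it visits `G` infinitely often. -/
theorem visits_of_breakpoints {Q : Type u} {b : ℕ → Q} {O : ℕ → Set Q} {G : Set Q}
    (hO : ∀ k, b k ∈ O k → b (k + 1) ∈ G ∨ b (k + 1) ∈ O (k + 1))
    (hbp : ∀ n, ∃ k, n ≤ k ∧ O k = ∅ ∧ (b (k + 1) ∈ G ∨ b (k + 1) ∈ O (k + 1))) :
    ∀ n, ∃ k, n ≤ k ∧ b k ∈ G := by
  intro n
  by_contra! hc
  obtain ⟨i, hi, _, hi'⟩ := hbp n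
  have hpend : ∀ k, i + 1 ≤ k → b k ∈ O k := by
    intro k hk
    induction k, hk using Nat.le_induction with
    | base => exact hi'.resolve_left (hc _ (by omega))
    | succ k hk ih => exact (hO k ih).resolve_left (hc _ (by omega))
  obtain ⟨j, hj, hj0, _⟩ := hbp (i + 1)
  have := hpend j hj
  rw [hj0] at this
  exact this

/-! ### Macroruns of the Bustan–Rubin–Vardi automaton -/

section BRV

variable {α : Type v} {Q : Type u} {M : ABA α Q}

/-- One step of two macroruns in parallel: from a state in `Q₁` of the first and `Q₂` of the second
there is an edge to such a state again, which respects the obligations `Q₃` of the first and `Q₄` of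
the second. -/
theorem BRV.exists_common_step {m n m' n' : BRVState Q} {σ : α}
    (h : n ∈ (BRV M).delta m σ) (h' : n' ∈ (BRV M).delta m' σ)
    {s : Q} (hs : s ∈ m.1) (hs' : s ∈ m'.2.1) :
    ∃ t, M.edge s t ∧ t ∈ n.1 ∧ t ∈ n'.2.1 ∧
      (s ∈ m.2.2.1 → t ∈ M.acc ∨ t ∈ n.2.2.1) ∧
      (s ∈ m'.2.2.2 → t ∈ M.accᶜ ∨ t ∈ n'.2.2.2) := by
  obtain ⟨_, _, hd, _, hb⟩ := h
  obtain ⟨_, _, _, hd', hb'⟩ := h'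
  have hX : ∃ X ⊆ n.1, PosBool.Sat X (M.delta s σ) ∧
      (s ∈ m.2.2.1 → ∀ t ∈ X, t ∈ M.acc ∨ t ∈ n.2.2.1) := by
    by_cases h3 : s ∈ m.2.2.1
    · rcases hb with ⟨h0, _⟩ | ⟨_, ⟨Y, hY, hsat, heq⟩, _⟩
      · rw [h0] at h3
        exact h3.elim
      · refine ⟨Y, hY, hsat s h3, fun _ t ht => ?_⟩
        rw [heq]
        exact or_iff_not_imp_left.2 fun hn => ⟨ht, hn⟩
    · exact ⟨n.1, subset_rfl, hd s hs, fun h => absurd h h3⟩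
  have hX' : ∃ X ⊆ n'.2.1, PosBool.Sat X (M.dual.delta s σ) ∧
      (s ∈ m'.2.2.2 → ∀ t ∈ X, t ∈ M.accᶜ ∨ t ∈ n'.2.2.2) := by
    by_cases h4 : s ∈ m'.2.2.2
    · rcases hb' with ⟨_, h0, _⟩ | ⟨_, _, ⟨Y, hY, hsat, heq⟩⟩
      · rw [h0] at h4
        exact h4.elim
      · refine ⟨Y, hY, hsat s h4, fun _ t ht => ?_⟩
        rw [heq]
        exact or_iff_not_imp_left.2 fun hn => ⟨ht, hn⟩
    · exact ⟨n'.2.1, subset_rfl, hd' s hs', fun h => absurd h h4⟩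
  obtain ⟨X, hXn, hsat, hXF⟩ := hX
  obtain ⟨X', hXn', hsat', hXF'⟩ := hX'
  obtain ⟨t, htv, ht, ht'⟩ := PosBool.exists_mem_of_sat_dual _ hsat hsat'
  exact ⟨t, ⟨σ, htv⟩, hXn ht, hXn' ht', fun h => hXF h t ht, fun h => hXF' h t ht'⟩

/-- After a breakpoint the obligation sets `Q₃` and `Q₄` are maximal. -/
theorem BRV.reset_of_acc {m n : BRVState Q} {σ : α} (hm : m ∈ (BRV M).acc)
    (h : n ∈ (BRV M).delta m σ) :
    n.2.2.1 = n.1 \ M.acc ∧ n.2.2.2 = n.2.1 \ M.dual.acc := by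
  obtain ⟨_, h3, h4⟩ := hm
  obtain ⟨_, _, _, _, ⟨_, _, hr⟩ | ⟨hne | hne, _⟩⟩ := h
  · exact hr
  · exact absurd h3 hne
  · exact absurd h4 hne

theorem BRV.fst_subset_of_mem_lang [Finite Q] (hweak : M.IsWeak) {m m' : BRVState Q} {w : ℕ → α}
    (hm' : BRVConsistent M m') (h : w ∈ ((BRV M).fromState m).lang)
    (h' : w ∈ ((BRV M).fromState m').lang) : m.1 ⊆ m'.1 := by
  obtain ⟨ρ, ⟨h0, hρ⟩, hacc⟩ := h
  obtain ⟨ρ', ⟨h0', hρ'⟩, hacc'⟩ := h'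
  intro s hs
  by_contra hns
  have hs0 : s ∈ (ρ 0).1 := by rw [show ρ 0 = m from h0]; exact hs
  have hs0' : s ∈ (ρ' 0).2.1 := by rw [show ρ' 0 = m' from h0', hm'.1]; exact hns
  choose! f hf using fun i (t : Q) (ht : t ∈ (ρ i).1 ∧ t ∈ (ρ' i).2.1) =>
    BRV.exists_common_step (hρ i) (hρ' i) ht.1 ht.2
  let b : ℕ → Q := fun n => Nat.rec s (fun i t => f i t) n
  have hb : ∀ i, b i ∈ (ρ i).1 ∧ b i ∈ (ρ' i).2.1 := by
    intro i
    induction i with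
    | zero => exact ⟨hs0, hs0'⟩
    | succ i ih => exact ⟨(hf i _ ih).2.1, (hf i _ ih).2.2.1⟩
  refine hweak.no_alternating_path (fun i => (hf i _ (hb i)).1)
    (visits_of_breakpoints (O := fun i => (ρ i).2.2.1) (fun i => (hf i _ (hb i)).2.2.2.1) ?_)
    (visits_of_breakpoints (O := fun i => (ρ' i).2.2.2) (fun i => (hf i _ (hb i)).2.2.2.2) ?_)
  · intro n
    obtain ⟨k, hk, hka⟩ := hacc n
    refine ⟨k, hk, hka.2.1, or_iff_not_imp_left.2 fun hn => ?_⟩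
    show b (k + 1) ∈ (ρ (k + 1)).2.2.1
    rw [(BRV.reset_of_acc hka (hρ k)).1]
    exact ⟨(hb (k + 1)).1, hn⟩
  · intro n
    obtain ⟨k, hk, hka⟩ := hacc' n
    refine ⟨k, hk, hka.2.2, or_iff_not_imp_left.2 fun hn => ?_⟩
    show b (k + 1) ∈ (ρ' (k + 1)).2.2.2
    rw [(BRV.reset_of_acc hka (hρ' k)).2]
    exact ⟨(hb (k + 1)).2, hn⟩

/-- The macrostate with the same `Q₁, Q₂` and maximal obligation sets `Q₃, Q₄`. -/
def BRVState.full (M : ABA α Q) (m : BRVState Q) : BRVState Q :=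
  (m.1, m.2.1, m.1 \ M.acc, m.2.1 \ M.dual.acc)

/-- The obligation sets of the source are irrelevant for a step to maximal obligation sets. -/
theorem BRV.full_mem_delta {m n p : BRVState Q} {σ : α} (h : n ∈ (BRV M).delta m σ)
    (hp : BRVConsistent M p) (hpm : p.1 = m.1) : n.full M ∈ (BRV M).delta p σ := by
  obtain ⟨hm, hn, hd, hd', _⟩ := h
  have hpm' : p.2.1 = m.2.1 := by rw [hp.1, hm.1, hpm]
  refine ⟨hp, ⟨hn.1, subset_rfl, subset_rfl⟩, by rwa [hpm], by rwa [hpm'], ?_⟩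
  by_cases h0 : p.2.2.1 = ∅ ∧ p.2.2.2 = ∅
  · exact Or.inl ⟨h0.1, h0.2, rfl, rfl⟩
  · refine Or.inr ⟨not_and_or.1 h0, ⟨n.1, subset_rfl, fun s hs => hd s ?_, rfl⟩,
      ⟨n.2.1, subset_rfl, fun s hs => hd' s ?_, rfl⟩⟩
    · exact hpm ▸ (hp.2.1 hs).1
    · exact hpm' ▸ (hp.2.2 hs).1

theorem BRV.lang_subset_of_fst_eq {m m' : BRVState Q} (hm' : BRVConsistent M m')
    (h1 : m.1 = m'.1) :
    ((BRV M).fromState m).lang ⊆ ((BRV M).fromState m').lang := by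
  rintro w ⟨ρ, ⟨h0, hρ⟩, hacc⟩
  have h0 : ρ 0 = m := h0
  have hρ : ∀ i, ρ (i + 1) ∈ (BRV M).delta (ρ i) (w i) := hρ
  obtain ⟨i, -, hi⟩ := hacc 0
  have hfull : (ρ (i + 1)).full M = ρ (i + 1) := by
    obtain ⟨h3, h4⟩ := BRV.reset_of_acc hi (hρ i)
    rw [BRVState.full, ← h3, ← h4]
  let ρ' : ℕ → BRVState Q := fun k =>
    if k = 0 then m' else if k ≤ i then (ρ k).full M else ρ k
  have hlate : ∀ k, i < k → ρ' k = ρ k := fun k hk => by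
    simp only [ρ']
    rw [if_neg (by omega), if_neg (by omega)]
  have hearly : ∀ k, k ≤ i → ρ' (k + 1) = (ρ (k + 1)).full M := fun k hk => by
    rcases hk.lt_or_eq with hk | rfl
    · simp only [ρ']
      rw [if_neg (by omega), if_pos (by omega)]
    · rw [hlate _ (by omega), hfull]
  have hcons : ∀ k, k ≤ i → BRVConsistent M (ρ' k) ∧ (ρ' k).1 = (ρ k).1 := by
    rintro (_ | k) hk
    · exact ⟨hm', by rw [h0]; exact h1.symm⟩
    · rw [hearly k (by omega)]
      exact ⟨⟨(hρ (k + 1)).1.1, subset_rfl, subset_rfl⟩, rfl⟩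
  refine ⟨ρ', ⟨rfl, fun k => ?_⟩, fun n => ?_⟩
  · show ρ' (k + 1) ∈ (BRV M).delta (ρ' k) (w k)
    rcases le_or_gt k i with hk | hk
    · rw [hearly k hk]
      exact BRV.full_mem_delta (hρ k) (hcons k hk).1 (hcons k hk).2
    · rw [hlate k hk, hlate (k + 1) (by omega)]
      exact hρ k
  · obtain ⟨k, hk, hka⟩ := hacc (max n (i + 1))
    refine ⟨k, by omega, ?_⟩
    rw [hlate k (by omega)]
    exact hka

end BRV

/-- languages of BRV macrostates are disjoint or equal according to the
first components. -/
theorem brv_lang_eq_or_disjoint {α Q : Type} [Fintype α] [Fintype Q] (M : ABA α Q)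
    (hweak : M.IsWeak) (hcomp : M.Complete)
    (m m' : BRVState Q) (hm : BRVConsistent M m) (hm' : BRVConsistent M m') :
    (m.1 ≠ m'.1 → ((BRV M).fromState m).lang ∩ ((BRV M).fromState m').lang = ∅) ∧
    (m.1 = m'.1 → ((BRV M).fromState m).lang = ((BRV M).fromState m').lang) := by
  refine ⟨fun hne => Set.eq_empty_iff_forall_notMem.2 fun w hw => hne ?_, fun heq => ?_⟩
  · exact (BRV.fst_subset_of_mem_lang hweak hm' hw.1 hw.2).antisymm
      (BRV.fst_subset_of_mem_lang hweak hm hw.2 hw.1)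
  · exact (BRV.lang_subset_of_fst_eq hm' heq).antisymm (BRV.lang_subset_of_fst_eq hm heq.symm)
end
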